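/- For every real β ≥ 0, all integers m ≥ n+1 with n ≥ 1, and every quaternion q ∈ ℍ with conjugate q̄: (β+m) · q · Z^{(β)}_{m−1,n}(q,q̄) = (β+m−n) · Z^{(β)}_{m,n}(q,q̄) − q̄ · Z^{(β)}_{m,n−1}(q,q̄). -/

import Mathlib

open Finset Quaternion

/-- Pochhammer symbol `(a)_j = a (a+1) ⋯ (a+j-1)`. -/
noncomputable def poch (a : ℝ) (j : ℕ) : ℝ := ∏ i ∈ Finset.range j, (a + i)

/-- The quaternionic 2D Laguerre polynomial `Z^{(β)}_{m,n}(q,q̄)` (for `m ≥ n`). -/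
noncomputable def Zq (β : ℝ) (m n : ℕ) (q : ℍ[ℝ]) : ℍ[ℝ] :=
  ∑ k ∈ Finset.range (n + 1),
    ((-1 : ℝ) ^ (n - k) * poch (β + 1) m /
        (k.factorial * (n - k).factorial * poch (β + 1) (m - k))) •
      (q ^ (m - k) * (star q) ^ (n - k))

theorem poch_succ' (a : ℝ) (j : ℕ) : poch a (j + 1) = poch a j * (a + j) := by
  unfold poch; rw [Finset.prod_range_succ]

theorem poch_ne (β : ℝ) (hβ : 0 ≤ β) (j : ℕ) : poch (β + 1) j ≠ 0 := by
  unfold poch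
  exact Finset.prod_ne_zero_iff.mpr (fun i _ => by positivity)

/-- Recurrence `(β+m) q Z^{(β)}_{m−1,n}(q,q̄) = (β+m−n) Z^{(β)}_{m,n}(q,q̄) − q̄ Z^{(β)}_{m,n−1}(q,q̄)`. -/
theorem quat_recurrence_mixed (β : ℝ) (hβ : 0 ≤ β) (m n : ℕ) (hn : 1 ≤ n)
    (hmn : n + 1 ≤ m) (q : ℍ[ℝ]) :
    (β + m) • (q * Zq β (m - 1) n q)
      = (β + m - n) • Zq β m n q - star q * Zq β m (n - 1) q := by
  obtain ⟨N, rfl⟩ : ∃ N, n = N + 1 := ⟨n - 1, by omega⟩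
  obtain ⟨M, rfl⟩ : ∃ M, m = M + 1 := ⟨m - 1, by omega⟩
  have hc : Commute (star q) q := (star_comm_self' q)
  simp only [Zq, Nat.add_sub_cancel]
  rw [Finset.sum_range_succ _ (N + 1), Finset.sum_range_succ _ (N + 1), mul_add, smul_add,
    smul_add, add_sub_right_comm]
  simp only [Finset.mul_sum, Finset.smul_sum]
  rw [← Finset.sum_sub_distrib]
  congr 1
  · refine Finset.sum_congr rfl fun k hk => ?_
    rw [Finset.mem_range] at hk
    obtain ⟨j, rfl⟩ : ∃ j, N = j + k := ⟨N - k, by omega⟩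
    obtain ⟨l, rfl⟩ : ∃ l, M = l + k := ⟨M - k, by omega⟩
    have e1 : j + k + 1 - k = j + 1 := by omega
    have e2 : l + k + 1 - k = l + 1 := by omega
    have e3 : j + k - k = j := by omega
    have e4 : l + k - k = l := by omega
    rw [e1, e2, e3, e4]
    have h1 : q * (q ^ l * star q ^ (j + 1)) = q ^ (l + 1) * star q ^ (j + 1) := by
      rw [← mul_assoc, ← pow_succ']
    have h2 : star q * (q ^ (l + 1) * star q ^ j) = q ^ (l + 1) * star q ^ (j + 1) := by
      rw [← mul_assoc, (hc.pow_right (l + 1)).eq, mul_assoc, ← pow_succ']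
    rw [mul_smul_comm, mul_smul_comm, h1, h2, smul_smul, smul_smul, ← sub_smul]
    congr 1
    rw [poch_succ' _ (l + k), poch_succ' _ l, Nat.factorial_succ]
    have p1 := poch_ne β hβ l
    have p3 : (β + 1 + (l : ℝ)) ≠ 0 := by positivity
    have p4 : ((k.factorial : ℕ) : ℝ) ≠ 0 := by positivity
    have p5 : ((j.factorial : ℕ) : ℝ) ≠ 0 := by positivity
    have p6 : ((j : ℝ) + 1) ≠ 0 := by positivity
    push_cast
    field_simp
    ring
  · obtain ⟨l, rfl⟩ : ∃ l, M = l + (N + 1) := ⟨M - (N + 1), by omega⟩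
    have e2 : l + (N + 1) + 1 - (N + 1) = l + 1 := by omega
    have e4 : l + (N + 1) - (N + 1) = l := by omega
    rw [e2, e4, Nat.sub_self]
    have h1 : q * (q ^ l * star q ^ 0) = q ^ (l + 1) * star q ^ 0 := by
      rw [← mul_assoc, ← pow_succ']
    rw [mul_smul_comm, h1, smul_smul, smul_smul]
    congr 1
    rw [poch_succ' _ (l + (N + 1)), poch_succ' _ l]
    have p1 := poch_ne β hβ l
    have p3 : (β + 1 + (l : ℝ)) ≠ 0 := by positivity
    have p4 : (((N + 1).factorial : ℕ) : ℝ) ≠ 0 := by positivity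
    push_cast
    field_simp
    ring
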